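/- For every u ∈ C_0^∞(ℝ³;ℝ³), ∫_{ℝ³}(Lu)·(Φu) dx = (1/2)|u(0)|² + B(u,u), where (with summation over repeated indices 1..3) B(u,u) = (α/2)∫_{ℝ³}(u_j ∂_k u_k − u_k ∂_k u_j) ∂_i Φ_ij dx + ∫_{ℝ³}(∂_k u_i ∂_k u_j + α ∂_k u_k ∂_i u_j) Φ_ij dx. -/

import Mathlib

/-!
Write `Lu = -div σ` with the pseudo-stress `σ = ∇u + α (div u) I` and integrate by parts once
against `Φu`. The origin contributes no boundary term: the singularities of `Φ` and `∇Φ` are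
integrable, and almost every line in a given direction misses the origin, so the fundamental theorem
of calculus applies on it. Where the derivative hits `u` one gets the second integral of `B(u,u)`.

Where it hits `Φ`, split `∂ₖΦᵢⱼ` into its radial part `-c_α Kᵢⱼ(x) xₖ`, with `K` homogeneous of
degree `-3`, and the rest. Since `α (1 - β) = 2β` for `β = α/(α+2)`, the rest combines with the
divergence terms to the first integral of `B(u,u)`, and what remains is
`-(c_α/2) ∫ Kᵢⱼ(x) (x · ∇)(uᵢuⱼ)(x) dx`. In polar coordinates the homogeneity of `K` cancels the
Jacobian, so each ray contributes `-Kᵢⱼ(w) uᵢ(0) uⱼ(0)`. The sphere averages of `K` are isotropic,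
and `4π c_α (1 + β) = 1` turns the total into `|u(0)|²/2`.
-/

open MeasureTheory Metric Real Filter

noncomputable section

/-- `ℝ³` as Euclidean space. -/
abbrev E3 : Type := EuclideanSpace ℝ (Fin 3)

/-- Partial derivative `∂ᵢ f` on `ℝ³`. -/
def pd (i : Fin 3) (f : E3 → ℝ) (x : E3) : ℝ :=
  fderiv ℝ f x (EuclideanSpace.single i 1)

/-- Laplacian on `ℝ³`. -/
def lap (f : E3 → ℝ) (x : E3) : ℝ := ∑ i, pd i (pd i f) x

/-- Divergence of a vector field on `ℝ³`. -/
def divg (u : E3 → Fin 3 → ℝ) (x : E3) : ℝ := ∑ k, pd k (fun y => u y k) x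

/-- The 3D Lamé operator `(Lu)ᵢ = -Δuᵢ - α ∂ᵢ (div u)`. -/
def lame (α : ℝ) (u : E3 → Fin 3 → ℝ) (x : E3) (i : Fin 3) : ℝ :=
  - lap (fun y => u y i) x - α * pd i (divg u) x

/-- The constant `c_α = (α+2)/(8π(α+1))`. -/
def cA (α : ℝ) : ℝ := (α + 2) / (8 * Real.pi * (α + 1))

/-- The fundamental matrix `Φ` of the 3D Lamé system:
`Φ_ij(x) = c_α |x|⁻¹ (δ_ij + (α/(α+2)) xᵢxⱼ/|x|²)`. -/
def Phi (α : ℝ) (x : E3) (i j : Fin 3) : ℝ :=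
  cA α * ‖x‖⁻¹ * ((if i = j then (1 : ℝ) else 0) + (α / (α + 2)) * (x i * x j) / ‖x‖ ^ 2)

/-- `u ∈ C₀^∞(U; ℝ³)`: smooth, compactly supported, with support inside `U`. -/
def IsTestOn (U : Set E3) (u : E3 → Fin 3 → ℝ) : Prop :=
  ContDiff ℝ (⊤ : ℕ∞) u ∧ HasCompactSupport u ∧ tsupport u ⊆ U

/-- `∫_{ℝ³} (Lu)·(Φ(·-y) u) dx`. -/
def lameEnergy (α : ℝ) (u : E3 → Fin 3 → ℝ) (y : E3) : ℝ :=
  ∫ x : E3, ∑ i, ∑ j, lame α u x i * Phi α (x - y) i j * u x j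

section PolarCoordinates

variable {E F : Type*} [NormedAddCommGroup E] [NormedSpace ℝ E] [MeasurableSpace E]
  [BorelSpace E] [NormedAddCommGroup F] [NormedSpace ℝ F] (μ : Measure E)

open Module (finrank)
open scoped Pointwise

theorem integral_volumeIoiPow (n : ℕ) (f : ℝ → F) :
    ∫ r, f r ∂Measure.volumeIoiPow n = ∫ r in Set.Ioi (0 : ℝ), r ^ n • f r := by
  simp only [Measure.volumeIoiPow, ENNReal.ofReal]
  rw [integral_withDensity_eq_integral_smul
      (measurable_subtype_coe.pow_const n).real_toNNReal,
    integral_subtype_comap measurableSet_Ioi fun r ↦ (r ^ n).toNNReal • f r]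
  refine setIntegral_congr_fun measurableSet_Ioi fun r hr ↦ ?_
  rw [NNReal.smul_def, Real.coe_toNNReal _ (pow_nonneg (le_of_lt hr) n)]

theorem integral_toSphere_comp (T : E ≃ₗᵢ[ℝ] E) (hT : MeasurePreserving T μ μ) (f : E → F) :
    ∫ w, f (T w) ∂μ.toSphere = ∫ w, f w ∂μ.toSphere := by
  let e : sphere (0 : E) 1 ≃ₜ sphere (0 : E) 1 :=
    T.toHomeomorph.subtype fun x : E ↦
      (by simp : x ∈ sphere (0 : E) 1 ↔ T x ∈ sphere (0 : E) 1)
  have himage (s : Set (sphere (0 : E) 1)) :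
      Set.Ioo (0 : ℝ) 1 • ((↑) '' (e ⁻¹' s) : Set E) =
        T ⁻¹' (Set.Ioo (0 : ℝ) 1 • ((↑) '' s : Set E)) := by
    ext x
    constructor
    · rintro ⟨r, hr, _, ⟨w, hw, rfl⟩, rfl⟩
      exact ⟨r, hr, e w, ⟨e w, hw, rfl⟩, (T.map_smul r (w : E)).symm⟩
    · rintro ⟨r, hr, _, ⟨v, hv, rfl⟩, hx⟩
      obtain ⟨w, rfl⟩ := e.surjective v
      exact ⟨r, hr, w, ⟨w, hv, rfl⟩, T.injective ((T.map_smul r (w : E)).trans hx)⟩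
  have he : MeasurePreserving e μ.toSphere μ.toSphere := by
    refine ⟨e.measurable, Measure.ext fun s hs ↦ ?_⟩
    rw [Measure.map_apply e.measurable hs, μ.toSphere_apply' hs,
      μ.toSphere_apply' (e.measurable hs), himage,
      hT.measure_preimage_emb T.toHomeomorph.measurableEmbedding]
  exact he.integral_comp e.measurableEmbedding fun w ↦ f w

variable [FiniteDimensional ℝ E] [μ.IsAddHaarMeasure]

theorem integral_eq_integral_toSphere [Nontrivial E] {f : E → F} (hf : Integrable f μ) :
    ∫ x, f x ∂μ =
      ∫ w, (∫ r in Set.Ioi (0 : ℝ), r ^ (finrank ℝ E - 1) • f (r • (w : E))) ∂μ.toSphere := by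
  have hpolar := μ.measurePreserving_homeomorphUnitSphereProd
  have hemb := (homeomorphUnitSphereProd E).measurableEmbedding
  set g : sphere (0 : E) 1 × Set.Ioi (0 : ℝ) → F := fun p ↦ f ((p.2 : ℝ) • (p.1 : E)) with hg
  have hgf : g ∘ homeomorphUnitSphereProd E = f ∘ Subtype.val := by
    funext x
    have hx : ‖(x : E)‖ ≠ 0 := norm_ne_zero_iff.2 x.2
    simp [hg, smul_smul, hx]
  have hg_int : Integrable g (μ.toSphere.prod (.volumeIoiPow (finrank ℝ E - 1))) := by
    rw [← hpolar.integrable_comp_emb hemb, hgf,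
      ← integrableOn_iff_comap_subtypeVal (measurableSet_singleton _).compl]
    exact hf.integrableOn
  calc ∫ x, f x ∂μ
      = ∫ x : ({0}ᶜ : Set E), f x ∂μ.comap (↑) := by
        rw [integral_subtype_comap (measurableSet_singleton _).compl, restrict_compl_singleton]
    _ = ∫ p, g p ∂μ.toSphere.prod (.volumeIoiPow (finrank ℝ E - 1)) := by
        rw [← hpolar.integral_comp hemb]
        exact integral_congr_ae (.of_forall fun x ↦ (congrFun hgf x).symm)
    _ = _ := by
        rw [integral_prod _ hg_int]
        exact integral_congr_ae (.of_forall fun w ↦ integral_volumeIoiPow _ fun r ↦ f (r • (w : E)))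

end PolarCoordinates

section SphereMoments

variable {ι : Type*} [Fintype ι]

theorem integrable_toSphere_mul (i j : ι) :
    Integrable (fun w : sphere (0 : EuclideanSpace ℝ ι) 1 ↦ w.1 i * w.1 j)
      (volume : Measure (EuclideanSpace ℝ ι)).toSphere := by
  have : Continuous fun w : sphere (0 : EuclideanSpace ℝ ι) 1 ↦ w.1 i * w.1 j := by fun_prop
  exact this.integrable_of_hasCompactSupport (.of_compactSpace _)

theorem integral_toSphere_mul_of_ne {i j : ι} (hij : i ≠ j) :
    ∫ w, w.1 i * w.1 j ∂(volume : Measure (EuclideanSpace ℝ ι)).toSphere = 0 := by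
  classical
  let T : EuclideanSpace ℝ ι ≃ₗᵢ[ℝ] EuclideanSpace ℝ ι := LinearIsometryEquiv.piLpCongrRight 2
    fun k ↦ if k = i then LinearIsometryEquiv.neg ℝ else LinearIsometryEquiv.refl ℝ ℝ
  have hT (x : EuclideanSpace ℝ ι) : T x i * T x j = -(x i * x j) := by
    simp [T, LinearIsometryEquiv.piLpCongrRight_apply, hij.symm]
  have := integral_toSphere_comp volume T T.measurePreserving fun x ↦ x i * x j
  simp only [hT, integral_neg] at this
  linarith

theorem integral_toSphere_sq_eq (i j : ι) :
    ∫ w, w.1 i * w.1 i ∂(volume : Measure (EuclideanSpace ℝ ι)).toSphere =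
      ∫ w, w.1 j * w.1 j ∂(volume : Measure (EuclideanSpace ℝ ι)).toSphere := by
  classical
  let T : EuclideanSpace ℝ ι ≃ₗᵢ[ℝ] EuclideanSpace ℝ ι :=
    LinearIsometryEquiv.piLpCongrLeft 2 ℝ ℝ (Equiv.swap i j)
  have hT (x : EuclideanSpace ℝ ι) : T x i = x j := by
    simp [T, LinearIsometryEquiv.piLpCongrLeft_apply, Equiv.piCongrLeft'_apply]
  simpa only [hT] using
    (integral_toSphere_comp volume T T.measurePreserving fun x ↦ x i * x i).symm

theorem integral_toSphere_mul [DecidableEq ι] (i j : ι) :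
    ∫ w, w.1 i * w.1 j ∂(volume : Measure (EuclideanSpace ℝ ι)).toSphere =
      if i = j then volume.real (ball (0 : EuclideanSpace ℝ ι) 1) else 0 := by
  split_ifs with hij
  · subst hij
    have hsum : ∑ k, ∫ w, w.1 k * w.1 k ∂(volume : Measure (EuclideanSpace ℝ ι)).toSphere =
        (volume : Measure (EuclideanSpace ℝ ι)).toSphere.real Set.univ := by
      have hw (w : sphere (0 : EuclideanSpace ℝ ι) 1) : ∑ k, w.1 k * w.1 k = 1 := by
        simpa [pow_two] using (EuclideanSpace.real_norm_sq_eq w.1).symm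
      rw [← integral_finsetSum _ fun k _ ↦ integrable_toSphere_mul k k]
      simp [hw]
    have : Nonempty ι := ⟨i⟩
    simpa [integral_toSphere_sq_eq _ i] using hsum
  · exact integral_toSphere_mul_of_ne hij

end SphereMoments

section LineDerivative

variable {E F : Type*} [NormedAddCommGroup E] [NormedSpace ℝ E] [MeasurableSpace E] [BorelSpace E]
  [NormedAddCommGroup F] [NormedSpace ℝ F] {μ : Measure E}

theorem ae_forall_add_smul_notMem [FiniteDimensional ℝ E] [μ.IsAddHaarMeasure]
    (hE : 1 < Module.finrank ℝ E) {S : Set E} (hS : S.Countable) (v : E) :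
    ∀ᵐ x ∂μ, ∀ t : ℝ, x + t • v ∉ S := by
  have hline (s : E) : μ (AffineSubspace.mk' s (ℝ ∙ v)) = 0 := by
    refine μ.addHaar_affineSubspace _ fun htop ↦ ?_
    have hspan : ℝ ∙ v = ⊤ := by
      rw [← AffineSubspace.direction_mk' s (ℝ ∙ v), htop, AffineSubspace.direction_top]
    exact hE.not_ge (finrank_le_one v fun w ↦
      Submodule.mem_span_singleton.1 (hspan ▸ Submodule.mem_top))
  refine measure_mono_null ?_ ((measure_biUnion_null_iff hS).2 fun s _ ↦ hline s)
  intro x hx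
  obtain ⟨t, ht⟩ : ∃ t : ℝ, x + t • v ∈ S := by simpa using hx
  refine Set.mem_biUnion ht ?_
  rw [SetLike.mem_coe, AffineSubspace.mem_mk']
  exact Submodule.mem_span_singleton.2 ⟨-t, by simp⟩

variable [SecondCountableTopology E] [SFinite μ] [μ.IsAddRightInvariant]

theorem integral_eq_zero_of_ae_hasDerivAt_line [CompleteSpace F] {f f' : E → F} {v : E}
    (hf : Integrable f μ) (hf' : Integrable f' μ)
    (hderiv : ∀ᵐ x ∂μ, ∀ t : ℝ, HasDerivAt (fun t ↦ f (x + t • v)) (f' (x + t • v)) t) :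
    ∫ x, f' x ∂μ = 0 := by
  -- By translation invariance `f'` may be averaged over the segment from `x` to `x + v`.
  let ν : Measure ℝ := volume.restrict (Set.Ioc 0 1)
  have hshear : MeasurePreserving (fun p : ℝ × E ↦ (p.1, p.2 + p.1 • v)) (ν.prod μ) (ν.prod μ) :=
    (MeasurePreserving.id ν).skew_product (g := fun t x ↦ x + t • v) (by fun_prop)
      (.of_forall fun t ↦ map_add_right_eq_self μ (t • v))
  have hint : Integrable (fun p : ℝ × E ↦ f' (p.2 + p.1 • v)) (ν.prod μ) :=
    hshear.integrable_comp_of_integrable (hf'.comp_snd ν)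
  have hftc : ∀ᵐ x ∂μ, ∫ t, f' (x + t • v) ∂ν = f (x + v) - f x := by
    filter_upwards [hint.prod_left_ae, hderiv] with x hx_int hx_deriv
    have := intervalIntegral.integral_eq_sub_of_hasDerivAt (a := 0) (b := 1)
      (fun t _ ↦ hx_deriv t)
      ((intervalIntegrable_iff_integrableOn_Ioc_of_le zero_le_one).2 hx_int)
    simpa [intervalIntegral.integral_of_le zero_le_one] using this
  calc ∫ x, f' x ∂μ = ∫ t, ∫ x, f' (x + t • v) ∂μ ∂ν := by
        simp [integral_add_right_eq_self, ν]
    _ = ∫ x, ∫ t, f' (x + t • v) ∂ν ∂μ := integral_integral_swap hint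
    _ = ∫ x, (f (x + v) - f x) ∂μ := integral_congr_ae hftc
    _ = 0 := by
        rw [integral_sub (hf.comp_add_right v) hf, integral_add_right_eq_self, sub_self]

end LineDerivative

theorem integral_eq_zero_of_hasLineDerivAt_off_countable {E F : Type*} [NormedAddCommGroup E]
    [NormedSpace ℝ E] [FiniteDimensional ℝ E] [MeasurableSpace E] [BorelSpace E]
    [NormedAddCommGroup F] [NormedSpace ℝ F] [CompleteSpace F]
    {μ : Measure E} [μ.IsAddHaarMeasure]
    (hE : 1 < Module.finrank ℝ E) {S : Set E} (hS : S.Countable) {f f' : E → F} {v : E}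
    (hf : Integrable f μ) (hf' : Integrable f' μ)
    (hderiv : ∀ x ∉ S, HasLineDerivAt ℝ f (f' x) x v) :
    ∫ x, f' x ∂μ = 0 := by
  refine integral_eq_zero_of_ae_hasDerivAt_line (v := v) hf hf' ?_
  filter_upwards [ae_forall_add_smul_notMem hE hS v] with x hx t
  have hd := hderiv _ (hx t)
  rw [HasLineDerivAt] at hd
  convert! hd.scomp_of_eq t ((hasDerivAt_id t).sub_const t) (by simp) using 1
  · ext s
    simp [add_assoc, ← add_smul]
  · simp

section PosHomogeneous

/-- Positive homogeneity of degree `p` on the punctured space; the value at the origin, where a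
function of negative degree is singular, is unconstrained. -/
def IsPosHomogeneous {E F : Type*} [Zero E] [SMul ℝ E] [SMul ℝ F] (p : ℝ) (f : E → F) : Prop :=
  ∀ ⦃r : ℝ⦄, 0 < r → ∀ ⦃x : E⦄, x ≠ 0 → f (r • x) = r ^ p • f x

namespace IsPosHomogeneous

variable {E F : Type*} [NormedAddCommGroup E] [NormedSpace ℝ E]
  [NormedAddCommGroup F] [NormedSpace ℝ F] {p : ℝ} {f : E → F}

theorem norm_smul_self (hf : IsPosHomogeneous p f) :
    IsPosHomogeneous (p + 1) fun x ↦ ‖x‖ • f x := by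
  intro r hr x hx
  simp only [norm_smul, norm_of_nonneg hr.le, hf hr hx, rpow_add_one hr.ne', smul_smul]
  ring_nf

theorem fderiv_apply (hf : IsPosHomogeneous p f) (v : E) :
    IsPosHomogeneous (p - 1) fun x ↦ fderiv ℝ f x v := by
  intro r hr x hx
  have hnear : (fun y ↦ f (r • y)) =ᶠ[nhds x] r ^ p • f :=
    (isOpen_ne.eventually_mem hx).mono fun y hy ↦ hf hr hy
  have hchain : r • fderiv ℝ f (r • x) = r ^ p • fderiv ℝ f x := by
    rw [← fderiv_comp_smul, hnear.fderiv_eq, fderiv_const_smul_field, Pi.smul_apply]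
  have hv : r • fderiv ℝ f (r • x) v = r ^ p • fderiv ℝ f x v := DFunLike.congr_fun hchain v
  rw [rpow_sub_one hr.ne', div_eq_inv_mul, mul_smul, ← hv, inv_smul_smul₀ hr.ne']

variable [FiniteDimensional ℝ E]

theorem exists_norm_le_rpow (hf : IsPosHomogeneous p f) (hcont : ContinuousOn f {0}ᶜ) :
    ∃ C, ∀ x ≠ 0, ‖f x‖ ≤ C * ‖x‖ ^ p := by
  have hsphere : sphere (0 : E) 1 ⊆ {0}ᶜ := fun w hw ↦ ne_zero_of_mem_unit_sphere ⟨w, hw⟩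
  obtain ⟨C, hC⟩ := (isCompact_sphere (0 : E) 1).exists_bound_of_continuousOn (hcont.mono hsphere)
  refine ⟨C, fun x hx ↦ ?_⟩
  have hr : 0 < ‖x‖ := norm_pos_iff.2 hx
  have hw : ‖x‖⁻¹ • x ∈ sphere (0 : E) 1 := by simp [norm_smul, hr.ne']
  have hfx : f x = ‖x‖ ^ p • f (‖x‖⁻¹ • x) := by
    rw [← hf hr (hsphere hw), smul_inv_smul₀ hr.ne']
  rw [hfx, norm_smul, norm_of_nonneg (by positivity), mul_comm]
  gcongr
  exact hC _ hw

variable [MeasurableSpace E] [BorelSpace E] [Nontrivial E] {μ : Measure E} [μ.IsAddHaarMeasure]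

theorem locallyIntegrable (hf : IsPosHomogeneous p f) (hcont : ContinuousOn f {0}ᶜ)
    (hp : -p < Module.finrank ℝ E) : LocallyIntegrable f μ := by
  obtain ⟨C, hC⟩ := hf.exists_norm_le_rpow hcont
  refine locallyIntegrable_of_norm_le_rpow (C := C) Module.finrank_pos hp ?_ ?_
  · filter_upwards [compl_mem_ae_iff.2 (measure_singleton (0 : E))] with x hx
    simpa using hC x hx
  · rw [← restrict_compl_singleton (μ := μ) (0 : E)]
    exact hcont.aestronglyMeasurable (measurableSet_singleton _).compl

variable {K : E → ℝ} {g : E → F}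

theorem integrable_smul_fderiv_self (hK : IsPosHomogeneous (-(Module.finrank ℝ E : ℝ)) K)
    (hK_cont : ContinuousOn K {0}ᶜ) (hg : ContDiff ℝ 1 g) (hg_supp : HasCompactSupport g) :
    Integrable (fun x ↦ K x • fderiv ℝ g x x) μ := by
  have hDg : Continuous (fderiv ℝ g) := hg.continuous_fderiv one_ne_zero
  have hdom : Integrable (fun x ↦ (‖x‖ • K x) • fderiv ℝ g x) μ :=
    (hK.norm_smul_self.locallyIntegrable (continuous_norm.continuousOn.smul hK_cont)
      (by simp)).integrable_smul_right_of_hasCompactSupport hDg (hg_supp.fderiv ℝ)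
  have hmeas : AEStronglyMeasurable (fun x ↦ K x • fderiv ℝ g x x) μ := by
    rw [← restrict_compl_singleton (μ := μ) (0 : E)]
    exact (hK_cont.smul (hDg.clm_apply continuous_id).continuousOn).aestronglyMeasurable
      (measurableSet_singleton _).compl
  refine hdom.mono hmeas (.of_forall fun x ↦ ?_)
  rw [norm_smul, norm_smul, norm_smul, norm_norm, mul_assoc, mul_left_comm]
  gcongr
  rw [mul_comm]
  exact (fderiv ℝ g x).le_opNorm x

theorem integral_smul_fderiv_self [CompleteSpace F]
    (hK : IsPosHomogeneous (-(Module.finrank ℝ E : ℝ)) K)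
    (hK_cont : ContinuousOn K {0}ᶜ) (hg : ContDiff ℝ 1 g) (hg_supp : HasCompactSupport g) :
    ∫ x, K x • fderiv ℝ g x x ∂μ = -(∫ w, K w ∂μ.toSphere) • g 0 := by
  rw [integral_eq_integral_toSphere μ (hK.integrable_smul_fderiv_self hK_cont hg hg_supp),
    ← integral_neg, ← integral_smul_const]
  refine integral_congr_ae (.of_forall fun w ↦ ?_)
  beta_reduce
  have hw : (w : E) ≠ 0 := ne_zero_of_mem_unit_sphere w
  have hderiv (r : ℝ) : deriv (fun r : ℝ ↦ g (r • (w : E))) r = fderiv ℝ g (r • (w : E)) w := by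
    have hline : HasDerivAt (fun r : ℝ ↦ r • (w : E)) (w : E) r := by
      simpa using (hasDerivAt_id r).smul_const (w : E)
    exact ((hg.differentiable one_ne_zero _).hasFDerivAt.comp_hasDerivAt r hline).deriv
  have hcancel : ∀ r ∈ Set.Ioi (0 : ℝ), r ^ (Module.finrank ℝ E - 1) • K (r • (w : E)) •
      fderiv ℝ g (r • (w : E)) (r • (w : E)) = K w • deriv (fun r : ℝ ↦ g (r • (w : E))) r := by
    intro r (hr : 0 < r)
    rw [hK hr hw, hderiv, map_smul, smul_smul, smul_smul, smul_eq_mul, rpow_neg hr.le,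
      rpow_natCast]
    congr 1
    rw [← Nat.sub_add_cancel (Module.finrank_pos (R := ℝ) (M := E)), Nat.add_sub_cancel, pow_succ]
    field_simp
  have hsupp : HasCompactSupport fun r : ℝ ↦ g (r • (w : E)) :=
    hg_supp.comp_isClosedEmbedding (isClosedEmbedding_smul_left hw)
  have hsmooth : ContDiff ℝ 1 fun r : ℝ ↦ g (r • (w : E)) := hg.comp (by fun_prop)
  rw [setIntegral_congr_fun measurableSet_Ioi hcancel, integral_smul,
    hsupp.integral_Ioi_deriv_eq hsmooth 0, zero_smul, smul_neg, neg_smul]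

theorem integral_fderiv_mul_add_mul_fderiv {f φ : E → ℝ} (hf : IsPosHomogeneous p f)
    (hf_smooth : ContDiffOn ℝ 1 f {0}ᶜ) (hE : 1 < Module.finrank ℝ E)
    (hp : 1 - p < Module.finrank ℝ E) (hφ : ContDiff ℝ 1 φ) (hφ_supp : HasCompactSupport φ)
    (v : E) :
    ∫ x, (fderiv ℝ φ x v * f x + φ x * fderiv ℝ f x v) ∂μ = 0 := by
  have hopen : IsOpen ({0}ᶜ : Set E) := isOpen_compl_singleton
  have hf_loc : LocallyIntegrable f μ := hf.locallyIntegrable hf_smooth.continuousOn (by linarith)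
  have hDf_loc : LocallyIntegrable (fun x ↦ fderiv ℝ f x v) μ :=
    (hf.fderiv_apply v).locallyIntegrable
      ((hf_smooth.continuousOn_fderiv_of_isOpen hopen le_rfl).clm_apply continuousOn_const)
      (by linarith)
  refine integral_eq_zero_of_hasLineDerivAt_off_countable (f := fun x ↦ φ x * f x) (v := v) hE
    (Set.countable_singleton 0)
    (hf_loc.integrable_smul_left_of_hasCompactSupport hφ.continuous hφ_supp)
    ((hf_loc.integrable_smul_left_of_hasCompactSupport
      ((hφ.continuous_fderiv one_ne_zero).clm_apply continuous_const)
      (hφ_supp.fderiv_apply (𝕜 := ℝ) v)).add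
      (hDf_loc.integrable_smul_left_of_hasCompactSupport hφ.continuous hφ_supp)) fun x hx ↦ ?_
  have hfx := ((hf_smooth.contDiffAt (hopen.mem_nhds hx)).differentiableAt one_ne_zero).hasFDerivAt
  have hφx := (hφ.differentiable one_ne_zero x).hasFDerivAt
  convert! (hφx.mul hfx).hasLineDerivAt v using 1
  simp only [_root_.add_apply, _root_.smul_apply, smul_eq_mul]
  ring

end IsPosHomogeneous

end PosHomogeneous

theorem hasFDerivAt_norm_inv {E : Type*} [NormedAddCommGroup E] [InnerProductSpace ℝ E] {x : E}
    (hx : x ≠ 0) : HasFDerivAt (fun y : E ↦ ‖y‖⁻¹) (-(‖x‖⁻¹ ^ 3) • innerSL ℝ x) x := by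
  have hr : ‖x‖ ≠ 0 := norm_ne_zero_iff.2 hx
  have hnorm := (hasStrictFDerivAt_norm_sq x).hasFDerivAt.sqrt (pow_ne_zero 2 hr)
  simp only [sqrt_sq (norm_nonneg _)] at hnorm
  refine ((hasDerivAt_inv hr).comp_hasFDerivAt x hnorm).congr_fderiv ?_
  ext y
  simp only [one_div, mul_inv_rev, neg_smul, _root_.neg_apply, _root_.smul_apply,
    coe_innerSL_apply, nsmul_eq_mul, Nat.cast_ofNat, smul_eq_mul, inv_pow, neg_inj]
  field_simp

section PartialDerivatives

variable {f g : E3 → ℝ} {x : E3}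

theorem pd_mul (k : Fin 3) (hf : DifferentiableAt ℝ f x) (hg : DifferentiableAt ℝ g x) :
    pd k (fun y ↦ f y * g y) x = pd k f x * g x + f x * pd k g x := by
  simp only [pd, fderiv_fun_mul hf hg, _root_.add_apply, _root_.smul_apply, smul_eq_mul]
  ring

theorem fderiv_apply_eq_sum_pd (f : E3 → ℝ) (x v : E3) :
    fderiv ℝ f x v = ∑ k, pd k f x * v k := by
  conv_lhs => rw [← (EuclideanSpace.basisFun (Fin 3) ℝ).sum_repr v]
  simp [pd, mul_comm]

theorem contDiff_pd {n : WithTop ℕ∞} (hf : ContDiff ℝ (n + 1) f) (k : Fin 3) :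
    ContDiff ℝ n (pd k f) :=
  (hf.fderiv_right le_rfl).clm_apply contDiff_const

end PartialDerivatives

section RadialKernel

/-- The kernel `K_ij` of degree `-3` for which, with `β = α/(α+2)`, the field `-c_α K_ij(x) x` is
the radial part of `∇Φ_ij(x)`. -/
def radialKernel (β : ℝ) (i j : Fin 3) (x : E3) : ℝ :=
  ((if i = j then 1 else 0) + 3 * β * (x i * x j) / ‖x‖ ^ 2) / ‖x‖ ^ 3

theorem radialKernel_comm (β : ℝ) (i j : Fin 3) (x : E3) :
    radialKernel β i j x = radialKernel β j i x := by
  simp only [radialKernel, eq_comm (a := i), mul_comm (x i)]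

theorem isPosHomogeneous_radialKernel (β : ℝ) (i j : Fin 3) :
    IsPosHomogeneous (-(Module.finrank ℝ E3 : ℝ)) (radialKernel β i j) := by
  intro r hr x hx
  have hx : ‖x‖ ≠ 0 := norm_ne_zero_iff.2 hx
  simp only [radialKernel, norm_smul, norm_of_nonneg hr.le, PiLp.smul_apply, smul_eq_mul,
    rpow_neg hr.le, rpow_natCast, finrank_euclideanSpace_fin]
  field_simp

theorem continuousOn_radialKernel (β : ℝ) (i j : Fin 3) :
    ContinuousOn (radialKernel β i j) {0}ᶜ := by
  unfold radialKernel
  fun_prop (disch := simp_all)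

theorem integral_toSphere_radialKernel (β : ℝ) (i j : Fin 3) :
    ∫ w, radialKernel β i j w ∂(volume : Measure E3).toSphere =
      if i = j then 4 * π * (1 + β) else 0 := by
  have hsphere (w : sphere (0 : E3) 1) :
      radialKernel β i j w = (if i = j then 1 else 0) + 3 * β * (w.1 i * w.1 j) := by
    simp [radialKernel]
  have hball : volume.real (ball (0 : E3) 1) = 4 / 3 * π := by
    rw [Measure.real, EuclideanSpace.volume_ball_fin_three, ENNReal.ofReal_one, one_pow, one_mul,
      ENNReal.toReal_ofReal (by positivity)]
    ring
  simp only [hsphere]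
  rw [integral_add (integrable_const _) ((integrable_toSphere_mul i j).const_mul _),
    integral_const_mul, integral_toSphere_mul, integral_const, Measure.toSphere_real_apply_univ,
    hball, finrank_euclideanSpace_fin]
  split_ifs
  · simp only [Nat.cast_ofNat, smul_eq_mul]
    ring
  · simp

theorem integrable_radialKernel_mul_fderiv (β : ℝ) (i j : Fin 3) {g : E3 → ℝ}
    (hg : ContDiff ℝ 1 g) (hg_supp : HasCompactSupport g) :
    Integrable fun x ↦ radialKernel β i j x * fderiv ℝ g x x :=
  (isPosHomogeneous_radialKernel β i j).integrable_smul_fderiv_self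
    (continuousOn_radialKernel β i j) hg hg_supp

theorem integral_radialKernel_mul_fderiv (β : ℝ) (i j : Fin 3) {g : E3 → ℝ} (hg : ContDiff ℝ 1 g)
    (hg_supp : HasCompactSupport g) :
    ∫ x, radialKernel β i j x * fderiv ℝ g x x = -(if i = j then 4 * π * (1 + β) else 0) * g 0 := by
  simpa only [integral_toSphere_radialKernel, smul_eq_mul] using
    (isPosHomogeneous_radialKernel β i j).integral_smul_fderiv_self (μ := volume)
      (continuousOn_radialKernel β i j) hg hg_supp

theorem sum_radialKernel_mul (β : ℝ) (j : Fin 3) {x : E3} (hx : x ≠ 0) :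
    ∑ i, radialKernel β i j x * x i = (1 + 3 * β) * x j / ‖x‖ ^ 3 := by
  have hr : ‖x‖ ≠ 0 := norm_ne_zero_iff.2 hx
  calc ∑ i, radialKernel β i j x * x i
      = ∑ i, ((if i = j then 1 else 0) * x i / ‖x‖ ^ 3 + 3 * β * x j / ‖x‖ ^ 5 * x i ^ 2) := by
        refine Finset.sum_congr rfl fun i _ ↦ ?_
        rw [radialKernel]
        field_simp
    _ = x j / ‖x‖ ^ 3 + 3 * β * x j / ‖x‖ ^ 5 * ‖x‖ ^ 2 := by
        rw [Finset.sum_add_distrib, ← Finset.sum_div, ← Finset.mul_sum,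
          EuclideanSpace.real_norm_sq_eq]
        simp
    _ = (1 + 3 * β) * x j / ‖x‖ ^ 3 := by
        field_simp

end RadialKernel

section FundamentalMatrix

theorem contDiffOn_Phi (α : ℝ) (i j : Fin 3) :
    ContDiffOn ℝ 1 (fun x ↦ Phi α x i j) {0}ᶜ := by
  intro x hx
  have hx : x ≠ 0 := hx
  have hnorm : ContDiffAt ℝ 1 (fun y : E3 ↦ ‖y‖) x := contDiffAt_norm ℝ hx
  have hr : ‖x‖ ≠ 0 := norm_ne_zero_iff.2 hx
  have hcoord (a : Fin 3) : ContDiffAt ℝ 1 (fun y : E3 ↦ y a) x := by fun_prop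
  exact ((contDiffAt_const.mul (hnorm.inv hr)).mul (contDiffAt_const.add
    ((contDiffAt_const.mul ((hcoord i).mul (hcoord j))).div (hnorm.pow 2)
      (pow_ne_zero 2 hr)))).contDiffWithinAt

theorem isPosHomogeneous_Phi (α : ℝ) (i j : Fin 3) :
    IsPosHomogeneous (-1) fun x ↦ Phi α x i j := by
  intro r hr x hx
  have hx : ‖x‖ ≠ 0 := norm_ne_zero_iff.2 hx
  simp only [Phi, norm_smul, norm_of_nonneg hr.le, PiLp.smul_apply, smul_eq_mul, rpow_neg_one]
  field_simp

theorem integrable_mul_Phi (α : ℝ) (i j : Fin 3) {φ : E3 → ℝ} (hφ : Continuous φ)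
    (hφ_supp : HasCompactSupport φ) : Integrable fun x ↦ φ x * Phi α x i j :=
  ((isPosHomogeneous_Phi α i j).locallyIntegrable (contDiffOn_Phi α i j).continuousOn
    (by norm_num)).integrable_smul_left_of_hasCompactSupport hφ hφ_supp

theorem integrable_mul_pd_Phi (α : ℝ) (i j k : Fin 3) {φ : E3 → ℝ} (hφ : Continuous φ)
    (hφ_supp : HasCompactSupport φ) :
    Integrable fun x ↦ φ x * pd k (fun z ↦ Phi α z i j) x := by
  have hcont : ContinuousOn (pd k fun z ↦ Phi α z i j) {0}ᶜ :=
    ((contDiffOn_Phi α i j).continuousOn_fderiv_of_isOpen isOpen_compl_singleton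
      le_rfl).clm_apply continuousOn_const
  have hhom : IsPosHomogeneous (-1 - 1) (pd k fun z ↦ Phi α z i j) :=
    (isPosHomogeneous_Phi α i j).fderiv_apply (EuclideanSpace.single k 1)
  exact (hhom.locallyIntegrable hcont
    (by norm_num)).integrable_smul_left_of_hasCompactSupport hφ hφ_supp

theorem integral_pd_mul_mul_Phi (α : ℝ) (i j k : Fin 3) {s v : E3 → ℝ} (hs : ContDiff ℝ 1 s)
    (hv : ContDiff ℝ 1 v) (hv_supp : HasCompactSupport v) :
    ∫ x, pd k s x * v x * Phi α x i j =
      -((∫ x, s x * pd k v x * Phi α x i j) + ∫ x, s x * v x * pd k (fun z ↦ Phi α z i j) x) := by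
  have hpd_supp : HasCompactSupport (pd k v) := hv_supp.fderiv_apply (𝕜 := ℝ) _
  have hcont {f : E3 → ℝ} (hf : ContDiff ℝ 1 f) : Continuous (pd k f) :=
    (contDiff_pd (n := 0) hf k).continuous
  have hint₁ : Integrable fun x ↦ pd k s x * v x * Phi α x i j :=
    integrable_mul_Phi α i j ((hcont hs).mul hv.continuous) hv_supp.mul_left
  have hint₂ : Integrable fun x ↦ s x * pd k v x * Phi α x i j :=
    integrable_mul_Phi α i j (hs.continuous.mul (hcont hv)) hpd_supp.mul_left
  have hint₃ : Integrable fun x ↦ s x * v x * pd k (fun z ↦ Phi α z i j) x :=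
    integrable_mul_pd_Phi α i j k (hs.continuous.mul hv.continuous) hv_supp.mul_left
  have hparts : ∫ x, (pd k (fun y ↦ s y * v y) x * Phi α x i j +
      s x * v x * pd k (fun z ↦ Phi α z i j) x) = 0 :=
    (isPosHomogeneous_Phi α i j).integral_fderiv_mul_add_mul_fderiv (contDiffOn_Phi α i j)
      (by simp) (by norm_num) (hs.mul hv) hv_supp.mul_left (EuclideanSpace.single k 1)
  simp only [fun x ↦ pd_mul k (hs.differentiable one_ne_zero x) (hv.differentiable one_ne_zero x),
    add_mul, add_assoc] at hparts
  rw [← integral_add hint₂ hint₃]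
  exact eq_neg_of_add_eq_zero_left ((integral_add hint₁ (hint₂.add hint₃)).symm.trans hparts)

theorem pd_Phi (α : ℝ) (i j k : Fin 3) {x : E3} (hx : x ≠ 0) :
    pd k (fun z ↦ Phi α z i j) x = cA α *
      (α / (α + 2) * ((if i = k then 1 else 0) * x j + (if j = k then 1 else 0) * x i) / ‖x‖ ^ 3 -
        radialKernel (α / (α + 2)) i j x * x k) := by
  have hr : ‖x‖ ≠ 0 := norm_ne_zero_iff.2 hx
  let e : E3 := EuclideanSpace.single k 1
  have hPhi (z : E3) : Phi α z i j = cA α *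
      ((if i = j then 1 else 0) * ‖z‖⁻¹ + α / (α + 2) * (z i * z j) * ‖z‖⁻¹ ^ 3) := by
    rw [Phi]
    ring
  have hcoord (a : Fin 3) :
      HasDerivAt (fun t : ℝ ↦ (x + t • e) a) (if a = k then 1 else 0) 0 := by
    have := ((hasDerivAt_id (0 : ℝ)).mul_const (if a = k then (1 : ℝ) else 0)).const_add (x a)
    simpa [e, PiLp.single_apply] using this
  have hinv : HasDerivAt (fun t : ℝ ↦ ‖x + t • e‖⁻¹) (-(x k / ‖x‖ ^ 3)) 0 := by
    refine HasDerivAt.congr_deriv ((hasFDerivAt_norm_inv hx).hasLineDerivAt e) ?_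
    simp [e, EuclideanSpace.inner_single_right, div_eq_inv_mul]
  have hline := ((hinv.const_mul (if i = j then (1 : ℝ) else 0)).add
    ((((hcoord i).mul (hcoord j)).const_mul (α / (α + 2))).mul (hinv.pow 3))).const_mul (cA α)
  have hdiff : DifferentiableAt ℝ (fun z ↦ Phi α z i j) x :=
    ((contDiffOn_Phi α i j).contDiffAt (isOpen_compl_singleton.mem_nhds hx)).differentiableAt
      one_ne_zero
  rw [pd, ← hdiff.lineDeriv_eq_fderiv, lineDeriv, funext fun t : ℝ ↦ hPhi (x + t • e)]
  refine hline.deriv.trans ?_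
  simp only [radialKernel, zero_smul, add_zero, Pi.mul_apply, Pi.pow_apply, inv_pow,
    Nat.reduceSub]
  generalize α / (α + 2) = β
  field_simp
  ring

theorem sum_pd_Phi (α : ℝ) (j : Fin 3) {x : E3} (hx : x ≠ 0) :
    ∑ i, pd i (fun z ↦ Phi α z i j) x = cA α * (α / (α + 2) - 1) * x j / ‖x‖ ^ 3 := by
  have hdelta : ∑ i, (x j + (if j = i then 1 else 0) * x i) = 4 * x j := by
    simp only [ite_mul, one_mul, zero_mul, Finset.sum_add_distrib, Finset.sum_const,
      Finset.card_univ, Fintype.card_fin, nsmul_eq_mul, Nat.cast_ofNat, Finset.sum_ite_eq,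
      Finset.mem_univ, if_true]
    ring
  simp only [pd_Phi α _ j _ hx, reduceIte, one_mul]
  rw [← Finset.mul_sum, Finset.sum_sub_distrib, sum_radialKernel_mul _ _ hx, ← Finset.sum_div,
    ← Finset.mul_sum, hdelta]
  ring

end FundamentalMatrix

theorem integral_sum_sum_sum {X ι F : Type*} [Fintype ι] [NormedAddCommGroup F]
    [NormedSpace ℝ F] [MeasurableSpace X] {μ : Measure X} {f : ι → ι → ι → X → F}
    (hf : ∀ i j k, Integrable (f i j k) μ) :
    ∫ x, ∑ i, ∑ j, ∑ k, f i j k x ∂μ = ∑ i, ∑ j, ∑ k, ∫ x, f i j k x ∂μ := by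
  rw [integral_finsetSum _ fun i _ ↦ integrable_finsetSum _ fun j _ ↦
    integrable_finsetSum _ fun k _ ↦ hf i j k]
  refine Finset.sum_congr rfl fun i _ ↦ ?_
  rw [integral_finsetSum _ fun j _ ↦ integrable_finsetSum _ fun k _ ↦ hf i j k]
  exact Finset.sum_congr rfl fun j _ ↦ integral_finsetSum _ fun k _ ↦ hf i j k

theorem hasCompactSupport_apply {X ι M : Type*} [TopologicalSpace X] [Zero M] {u : X → ι → M}
    (hu : HasCompactSupport u) (i : ι) : HasCompactSupport fun x ↦ u x i :=
  hu.comp_left (g := fun v : ι → M ↦ v i) rfl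

section Stress

variable {α : ℝ} {u : E3 → Fin 3 → ℝ}

/-- The pseudo-stress `σ_ik = ∂ₖuᵢ + α δ_ik div u`, chosen so that `Lu = -div σ`. -/
def stress (α : ℝ) (u : E3 → Fin 3 → ℝ) (i k : Fin 3) (x : E3) : ℝ :=
  pd k (fun y ↦ u y i) x + if i = k then α * divg u x else 0

theorem contDiff_divg {n : WithTop ℕ∞} (hu : ContDiff ℝ (n + 1) u) : ContDiff ℝ n (divg u) :=
  ContDiff.sum fun k _ ↦ contDiff_pd (contDiff_pi.1 hu k) k

theorem contDiff_stress {n : WithTop ℕ∞} (hu : ContDiff ℝ (n + 1) u) (i k : Fin 3) :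
    ContDiff ℝ n (stress α u i k) := by
  refine (contDiff_pd (contDiff_pi.1 hu i) k).add ?_
  split_ifs
  · exact contDiff_const.mul (contDiff_divg hu)
  · exact contDiff_const

theorem lame_eq_neg_sum_pd_stress (hu : ContDiff ℝ 2 u) (x : E3) (i : Fin 3) :
    lame α u x i = -∑ k, pd k (stress α u i k) x := by
  have hu : ContDiff ℝ (1 + 1) u := hu
  have hpd (k : Fin 3) : DifferentiableAt ℝ (pd k fun y ↦ u y i) x :=
    (contDiff_pd (contDiff_pi.1 hu i) k).differentiable one_ne_zero x
  have hdiv : DifferentiableAt ℝ (divg u) x := (contDiff_divg hu).differentiable one_ne_zero x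
  have hstress (k : Fin 3) : pd k (stress α u i k) x =
      pd k (pd k fun y ↦ u y i) x + if i = k then α * pd i (divg u) x else 0 := by
    split_ifs with hik
    · subst hik
      have hdiag : stress α u i i = fun y ↦ pd i (fun z ↦ u z i) y + α * divg u y :=
        funext fun y ↦ by rw [stress, if_pos rfl]
      rw [pd, hdiag, fderiv_fun_add (hpd i) (hdiv.const_mul α), fderiv_const_mul hdiv]
      rfl
    · have hoff : stress α u i k = pd k fun z ↦ u z i :=
        funext fun y ↦ by rw [stress, if_neg hik, add_zero]
      rw [hoff, add_zero]
  simp only [hstress, lame, lap, Finset.sum_add_distrib, Finset.sum_ite_eq, Finset.mem_univ,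
    if_true]
  ring

theorem sum_stress_mul (i : Fin 3) (x : E3) (a : Fin 3 → ℝ) :
    ∑ k, stress α u i k x * a k =
      ∑ k, (pd k (fun y ↦ u y i) x * a k + α * pd k (fun y ↦ u y k) x * a i) := by
  simp only [stress, divg, add_mul, ite_mul, zero_mul, Finset.sum_add_distrib, Finset.sum_ite_eq,
    Finset.mem_univ, if_true, Finset.mul_sum, Finset.sum_mul]

theorem integral_lame_mul_Phi (hu : ContDiff ℝ 2 u) (hu_supp : HasCompactSupport u) :
    ∫ x, ∑ i, ∑ j, lame α u x i * Phi α x i j * u x j =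
      (∫ x, ∑ i, ∑ j, ∑ k, stress α u i k x * pd k (fun z ↦ u z j) x * Phi α x i j) +
        ∫ x, ∑ i, ∑ j, ∑ k, stress α u i k x * u x j * pd k (fun z ↦ Phi α z i j) x := by
  have hσ (i k : Fin 3) : ContDiff ℝ 1 (stress α u i k) := contDiff_stress hu i k
  have hu₁ (j : Fin 3) : ContDiff ℝ 1 fun x ↦ u x j := contDiff_pi.1 (hu.of_le one_le_two) j
  have hcont {f : E3 → ℝ} (hf : ContDiff ℝ 1 f) (k : Fin 3) : Continuous (pd k f) :=
    (contDiff_pd (n := 0) hf k).continuous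
  have hsupp (j : Fin 3) : HasCompactSupport fun x ↦ u x j := hasCompactSupport_apply hu_supp j
  have hint₁ (i j k : Fin 3) : Integrable fun x ↦
      pd k (stress α u i k) x * u x j * Phi α x i j :=
    integrable_mul_Phi α i j ((hcont (hσ i k) k).mul (hu₁ j).continuous) (hsupp j).mul_left
  have hint₂ (i j k : Fin 3) : Integrable fun x ↦
      stress α u i k x * pd k (fun z ↦ u z j) x * Phi α x i j :=
    integrable_mul_Phi α i j ((hσ i k).continuous.mul (hcont (hu₁ j) k))
      ((hsupp j).fderiv_apply (𝕜 := ℝ) _).mul_left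
  have hint₃ (i j k : Fin 3) : Integrable fun x ↦
      stress α u i k x * u x j * pd k (fun z ↦ Phi α z i j) x :=
    integrable_mul_pd_Phi α i j k ((hσ i k).continuous.mul (hu₁ j).continuous) (hsupp j).mul_left
  have hpoint (x : E3) : ∑ i, ∑ j, lame α u x i * Phi α x i j * u x j =
      -∑ i, ∑ j, ∑ k, pd k (stress α u i k) x * u x j * Phi α x i j := by
    simp only [lame_eq_neg_sum_pd_stress hu, neg_mul, Finset.sum_neg_distrib, Finset.sum_mul,
      mul_right_comm _ (Phi _ _ _ _)]
  simp only [hpoint, integral_neg]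
  rw [integral_sum_sum_sum hint₁, integral_sum_sum_sum hint₂, integral_sum_sum_sum hint₃]
  simp only [integral_pd_mul_mul_Phi α _ _ _ (hσ _ _) (hu₁ _) (hsupp _),
    Finset.sum_neg_distrib, neg_neg, Finset.sum_add_distrib]

end Stress

section Remainder

variable {α : ℝ} {u : E3 → Fin 3 → ℝ}

theorem sum_radialKernel_mul_fderiv (β : ℝ) (hu : Differentiable ℝ u) (x : E3) :
    ∑ i, ∑ j, radialKernel β i j x * fderiv ℝ (fun y ↦ u y i * u y j) x x =
      2 * ∑ i, ∑ j, ∑ k, pd k (fun y ↦ u y i) x * u x j * (radialKernel β i j x * x k) := by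
  have hu (i : Fin 3) : DifferentiableAt ℝ (fun y ↦ u y i) x := differentiable_pi.1 hu i x
  have hswap : ∑ i, ∑ j, ∑ k, u x i * pd k (fun y ↦ u y j) x * (radialKernel β i j x * x k) =
      ∑ i, ∑ j, ∑ k, pd k (fun y ↦ u y i) x * u x j * (radialKernel β i j x * x k) := by
    rw [Finset.sum_comm]
    simp only [radialKernel_comm β, mul_comm (u x _)]
  rw [two_mul]
  nth_rw 1 [← hswap]
  simp only [fderiv_apply_eq_sum_pd, pd_mul _ (hu _) (hu _), Finset.mul_sum,
    ← Finset.sum_add_distrib]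
  refine Finset.sum_congr rfl fun i _ ↦ Finset.sum_congr rfl fun j _ ↦
    Finset.sum_congr rfl fun k _ ↦ ?_
  ring

theorem sum_pd_mul_mul_pd_Phi (hu : Differentiable ℝ u) {x : E3} (hx : x ≠ 0) :
    ∑ i, ∑ j, ∑ k, pd k (fun y ↦ u y i) x * u x j * pd k (fun z ↦ Phi α z i j) x =
      cA α * (α / (α + 2)) / ‖x‖ ^ 3 * ∑ j, ∑ k,
        (u x j * pd k (fun y ↦ u y k) x + u x k * pd k (fun y ↦ u y j) x) * x j -
      cA α / 2 * ∑ i, ∑ j,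
        radialKernel (α / (α + 2)) i j x * fderiv ℝ (fun y ↦ u y i * u y j) x x := by
  have hdelta : ∑ i, ∑ j, ∑ k, pd k (fun y ↦ u y i) x * u x j *
      ((if i = k then 1 else 0) * x j + (if j = k then 1 else 0) * x i) =
        ∑ j, ∑ k, (u x j * pd k (fun y ↦ u y k) x + u x k * pd k (fun y ↦ u y j) x) * x j := by
    simp only [mul_add, add_mul, ite_mul, mul_ite, one_mul, zero_mul, mul_zero,
      Finset.sum_add_distrib, Finset.sum_ite_eq, Finset.mem_univ, if_true]
    rw [Finset.sum_comm]
    simp only [mul_comm (pd _ _ _)]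
  rw [sum_radialKernel_mul_fderiv _ hu, ← hdelta]
  simp only [Finset.mul_sum, ← Finset.sum_sub_distrib]
  refine Finset.sum_congr rfl fun i _ ↦ Finset.sum_congr rfl fun j _ ↦
    Finset.sum_congr rfl fun k _ ↦ ?_
  rw [pd_Phi α i j k hx]
  ring

theorem mul_sum_mul_pd_Phi (hα : α ≠ -2) (a : Fin 3 → Fin 3 → ℝ) {x : E3} (hx : x ≠ 0) :
    α * ∑ i, ∑ j, ∑ k, a j k * pd i (fun z ↦ Phi α z i j) x =
      -(2 * (cA α * (α / (α + 2)) / ‖x‖ ^ 3 * ∑ j, ∑ k, a j k * x j)) := by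
  have hα : α + 2 ≠ 0 := fun h ↦ hα (by linarith)
  have hcoeff : α * (α / (α + 2) - 1) = -(2 * (α / (α + 2))) := by
    field_simp
    ring
  rw [Finset.sum_comm, Finset.mul_sum, Finset.mul_sum, Finset.mul_sum, ← Finset.sum_neg_distrib]
  refine Finset.sum_congr rfl fun j _ ↦ ?_
  simp only [← Finset.sum_mul, ← Finset.mul_sum, sum_pd_Phi α j hx]
  linear_combination (∑ k, a j k) * cA α * x j / ‖x‖ ^ 3 * hcoeff

theorem sum_stress_mul_pd_Phi (hα : α ≠ -2) (hu : Differentiable ℝ u) {x : E3} (hx : x ≠ 0) :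
    ∑ i, ∑ j, ∑ k, stress α u i k x * u x j * pd k (fun z ↦ Phi α z i j) x =
      α / 2 * (∑ i, ∑ j, ∑ k,
        (u x j * pd k (fun z ↦ u z k) x - u x k * pd k (fun z ↦ u z j) x) *
          pd i (fun z ↦ Phi α z i j) x) -
      cA α / 2 * ∑ i, ∑ j,
        radialKernel (α / (α + 2)) i j x * fderiv ℝ (fun y ↦ u y i * u y j) x x := by
  -- Split `uⱼ div u` into halves antisymmetric and symmetric under exchanging `uⱼ` with the
  -- component inside the derivative: the first belongs to `B(u,u)`, the second cancels the
  -- non-radial part of `∂ₖuᵢ uⱼ ∂ₖΦᵢⱼ`.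
  have hdiv := mul_sum_mul_pd_Phi hα
    (fun j k ↦ u x j * pd k (fun z ↦ u z k) x + u x k * pd k (fun z ↦ u z j) x) hx
  have hsplit : α * ∑ i, ∑ j, ∑ k, pd k (fun z ↦ u z k) x * (u x j * pd i (fun z ↦ Phi α z i j) x) =
      α / 2 * (∑ i, ∑ j, ∑ k,
        (u x j * pd k (fun z ↦ u z k) x - u x k * pd k (fun z ↦ u z j) x) *
          pd i (fun z ↦ Phi α z i j) x) +
      α / 2 * (∑ i, ∑ j, ∑ k,
        (u x j * pd k (fun z ↦ u z k) x + u x k * pd k (fun z ↦ u z j) x) *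
          pd i (fun z ↦ Phi α z i j) x) := by
    simp only [Finset.mul_sum, ← Finset.sum_add_distrib]
    refine Finset.sum_congr rfl fun i _ ↦ Finset.sum_congr rfl fun j _ ↦
      Finset.sum_congr rfl fun k _ ↦ ?_
    ring
  have hgrad := sum_pd_mul_mul_pd_Phi (α := α) hu hx
  simp only [mul_assoc (stress _ _ _ _ _), sum_stress_mul, Finset.sum_add_distrib]
  simp only [mul_assoc α, ← Finset.mul_sum, hsplit]
  simp only [← mul_assoc (pd _ _ _), hgrad]
  linear_combination hdiv / 2

theorem four_pi_mul_cA_mul (hα₁ : α ≠ -1) (hα₂ : α ≠ -2) :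
    4 * π * cA α * (1 + α / (α + 2)) = 1 := by
  have hα₁ : α + 1 ≠ 0 := fun h ↦ hα₁ (by linarith)
  have hα₂ : α + 2 ≠ 0 := fun h ↦ hα₂ (by linarith)
  rw [cA]
  field_simp
  ring

theorem integral_sum_radialKernel_mul_fderiv (β : ℝ) (hu : ContDiff ℝ 1 u)
    (hu_supp : HasCompactSupport u) :
    ∫ x, ∑ i, ∑ j, radialKernel β i j x * fderiv ℝ (fun y ↦ u y i * u y j) x x =
      -(4 * π * (1 + β)) * ∑ i, u 0 i ^ 2 := by
  have hmul (i j : Fin 3) : ContDiff ℝ 1 fun x ↦ u x i * u x j :=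
    (contDiff_pi.1 hu i).mul (contDiff_pi.1 hu j)
  have hmul_supp (i j : Fin 3) : HasCompactSupport fun x ↦ u x i * u x j :=
    (hasCompactSupport_apply hu_supp i).mul_right
  have hint (i j : Fin 3) :=
    integrable_radialKernel_mul_fderiv β i j (hmul i j) (hmul_supp i j)
  rw [integral_finsetSum _ fun i _ ↦ integrable_finsetSum _ fun j _ ↦ hint i j, Finset.mul_sum]
  refine Finset.sum_congr rfl fun i _ ↦ ?_
  rw [integral_finsetSum _ fun j _ ↦ hint i j]
  simp only [integral_radialKernel_mul_fderiv _ _ _ (hmul _ _) (hmul_supp _ _), neg_mul, ite_mul,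
    zero_mul, Finset.sum_neg_distrib, Finset.sum_ite_eq, Finset.mem_univ, if_true, pow_two]

theorem integral_stress_mul_pd_Phi (hα₁ : α ≠ -1) (hα₂ : α ≠ -2) (hu : ContDiff ℝ 1 u)
    (hu_supp : HasCompactSupport u) :
    ∫ x, ∑ i, ∑ j, ∑ k, stress α u i k x * u x j * pd k (fun z ↦ Phi α z i j) x =
      1 / 2 * (∑ i, u 0 i ^ 2) + α / 2 * ∫ x, ∑ i, ∑ j, ∑ k,
        (u x j * pd k (fun z ↦ u z k) x - u x k * pd k (fun z ↦ u z j) x) *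
          pd i (fun z ↦ Phi α z i j) x := by
  have hu₁ (j : Fin 3) : ContDiff ℝ 1 fun x ↦ u x j := contDiff_pi.1 hu j
  have hu_pd (j k : Fin 3) : Continuous (pd k fun x ↦ u x j) :=
    (contDiff_pd (n := 0) (hu₁ j) k).continuous
  have hsupp (j : Fin 3) : HasCompactSupport fun x ↦ u x j := hasCompactSupport_apply hu_supp j
  have hB (i j k : Fin 3) : Integrable fun x ↦
      (u x j * pd k (fun z ↦ u z k) x - u x k * pd k (fun z ↦ u z j) x) *
        pd i (fun z ↦ Phi α z i j) x :=
    integrable_mul_pd_Phi α i j i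
      (((hu₁ j).continuous.mul (hu_pd k k)).sub ((hu₁ k).continuous.mul (hu_pd j k)))
      ((hsupp j).mul_right.sub (hsupp k).mul_right)
  rw [integral_congr_ae ((Measure.ae_ne volume (0 : E3)).mono fun x hx ↦
      sum_stress_mul_pd_Phi hα₂ (hu.differentiable one_ne_zero) hx),
    integral_sub (.const_mul (integrable_finsetSum _ fun i _ ↦ integrable_finsetSum _ fun j _ ↦
      integrable_finsetSum _ fun k _ ↦ hB i j k) _)
      (.const_mul (integrable_finsetSum _ fun i _ ↦ integrable_finsetSum _ fun j _ ↦
        integrable_radialKernel_mul_fderiv _ i j ((hu₁ i).mul (hu₁ j)) (hsupp i).mul_right) _),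
    integral_const_mul, integral_const_mul,
    integral_sum_radialKernel_mul_fderiv _ hu hu_supp]
  linear_combination (∑ i, u 0 i ^ 2) / 2 * four_pi_mul_cA_mul hα₁ hα₂

end Remainder

theorem lame_energy_eq_half_sq_add_bilinear_general {α : ℝ} (hα₁ : α ≠ -1) (hα₂ : α ≠ -2)
    {u : E3 → Fin 3 → ℝ} (hu : ContDiff ℝ 2 u) (hu_supp : HasCompactSupport u) :
    ∫ x : E3, ∑ i, ∑ j, lame α u x i * Phi α x i j * u x j =
      (1 / 2) * (∑ i, (u 0 i) ^ 2) +
      ((α / 2) * ∫ x : E3, ∑ i, ∑ j, ∑ k,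
          (u x j * pd k (fun z ↦ u z k) x - u x k * pd k (fun z ↦ u z j) x) *
            pd i (fun z ↦ Phi α z i j) x) +
      (∫ x : E3, ∑ i, ∑ j, ∑ k,
          (pd k (fun z ↦ u z i) x * pd k (fun z ↦ u z j) x +
            α * pd k (fun z ↦ u z k) x * pd i (fun z ↦ u z j) x) * Phi α x i j) := by
  have hstress (x : E3) (i j : Fin 3) :
      ∑ k, stress α u i k x * pd k (fun z ↦ u z j) x * Phi α x i j =
        ∑ k, (pd k (fun z ↦ u z i) x * pd k (fun z ↦ u z j) x +
          α * pd k (fun z ↦ u z k) x * pd i (fun z ↦ u z j) x) * Phi α x i j := by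
    rw [← Finset.sum_mul, ← Finset.sum_mul, sum_stress_mul i x fun k ↦ pd k (fun z ↦ u z j) x]
  rw [integral_lame_mul_Phi hu hu_supp,
    integral_stress_mul_pd_Phi hα₁ hα₂ (hu.of_le one_le_two) hu_supp, add_comm]
  simp only [hstress]

/-- `∫ (Lu)·(Φu) dx = (1/2)|u(0)|² + B(u,u)` for test fields `u`. -/
theorem lame_energy_eq_half_sq_add_bilinear
    (α : ℝ) (hα : -1 < α)
    (u : E3 → Fin 3 → ℝ) (hu : IsTestOn Set.univ u) :
    ∫ x : E3, ∑ i, ∑ j, lame α u x i * Phi α x i j * u x j =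
      (1 / 2) * (∑ i, (u 0 i) ^ 2) +
      ((α / 2) * ∫ x : E3, ∑ i, ∑ j, ∑ k,
          (u x j * pd k (fun z => u z k) x - u x k * pd k (fun z => u z j) x) *
            pd i (fun z => Phi α z i j) x) +
      (∫ x : E3, ∑ i, ∑ j, ∑ k,
          (pd k (fun z => u z i) x * pd k (fun z => u z j) x +
            α * pd k (fun z => u z k) x * pd i (fun z => u z j) x) * Phi α x i j) := by
  exact lame_energy_eq_half_sq_add_bilinear_general (by linarith) (by linarith)
    (contDiff_infty.1 hu.1 2) hu.2.1
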